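/- arXiv:2511.11390 — 2 statements merged into one kernel-verified Lean document; each statement's English description precedes it below -/
import Mathlib

section
/- Characterization of the exact prophecy annotation via the winning region: Let A = (Q, q0, δ, safe(F)) be a deterministic safety automaton over Σ, M_p = (S^p, s0^p, τ^p, o^p) ∈ ℙ a plant, and Win the winning region of the safety game of A and M_p. For all q ∈ Q, s ∈ S^p, and α ⊆ O_c: M_p(s) ∈ κ*(q, α) if and only if q ∈ F and (δ(q, α ∪ β ∪ o^p(s)), τ^p(s, α ∪ β)) ∈ Win for every β ⊆ O_e. -/
/-- A Moore machine over atomic propositions `AP`, with input propositions `I ⊆ AP`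
and output propositions `O ⊆ AP`.  Letters in `2^I` are encoded as sets `σ : Set AP`
where the transition function is invariant under intersecting with `I`, and the
output labeling produces subsets of `O`. -/
structure Moore (AP : Type) (I O : Set AP) : Type 1 where
  S : Type
  fin : Finite S
  s0 : S
  tr : S → Set AP → S
  out : S → Set AP
  tr_inv : ∀ s σ, tr s σ = tr s (σ ∩ I)
  out_sub : ∀ s, out s ⊆ O

namespace Moore

variable {AP : Type} {I O : Set AP}

/-- `M.at' s` is `M` with initial state replaced by `s` (written `M(s)` in the paper). -/
def at' (M : Moore AP I O) (s : M.S) : Moore AP I O :=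
  { M with s0 := s }

/-- The run of `M` on an infinite word `γ`: at step `j` the machine reads input `γ j ∩ I`. -/
def run (M : Moore AP I O) (γ : ℕ → Set AP) : ℕ → M.S
  | 0 => M.s0
  | j + 1 => M.tr (M.run γ j) (γ j ∩ I)

/-- `Traces(M)`: all `γ` whose `O`-component agrees with the outputs along the run of `M`. -/
def Traces (M : Moore AP I O) : Set (ℕ → Set AP) :=
  { γ | ∀ j, γ j ∩ O = M.out (M.run γ j) }

end Moore

/-- Parallel composition `M1 ∥ M2` of Moore machines of two distinct processes. -/
def par {AP : Type} {I1 O1 I2 O2 : Set AP} (M1 : Moore AP I1 O1) (M2 : Moore AP I2 O2) :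
    Moore AP ((I1 ∪ I2) \ (O1 ∪ O2)) (O1 ∪ O2) where
  S := M1.S × M2.S
  fin := by haveI := M1.fin; haveI := M2.fin; exact inferInstance
  s0 := (M1.s0, M2.s0)
  tr p σ :=
    (M1.tr p.1 ((σ ∩ ((I1 ∪ I2) \ (O1 ∪ O2)) ∪ M2.out p.2) ∩ I1),
     M2.tr p.2 ((σ ∩ ((I1 ∪ I2) \ (O1 ∪ O2)) ∪ M1.out p.1) ∩ I2))
  out p := M1.out p.1 ∪ M2.out p.2
  tr_inv := by intro s σ; simp [Set.inter_assoc]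
  out_sub p := Set.union_subset_union (M1.out_sub p.1) (M2.out_sub p.2)

/-- A deterministic safety automaton `A = (Q, q0, δ, safe(F))` over alphabet `2^AP`. -/
structure DSA (AP : Type) : Type 1 where
  Q : Type
  fin : Finite Q
  q0 : Q
  δ : Q → Set AP → Q
  F : Set Q

namespace DSA

variable {AP : Type}

/-- The run of `A` from state `q` on the infinite word `γ`. -/
def run (A : DSA AP) (q : A.Q) (γ : ℕ → Set AP) : ℕ → A.Q
  | 0 => q
  | i + 1 => A.δ (A.run q γ i) (γ i)

/-- `L(A)`: all words whose run from `q0` stays in the safe states `F`. -/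
def Lang (A : DSA AP) : Set (ℕ → Set AP) :=
  { γ | ∀ i, A.run A.q0 γ i ∈ A.F }

end DSA

/-- `Runs(A, q, M) ⊆ safe(F)`: every run of `A` from `q` on a trace of `M` stays in `F`. -/
def SafeRuns {AP : Type} {I O : Set AP} (A : DSA AP) (q : A.Q) (M : Moore AP I O) : Prop :=
  ∀ γ ∈ M.Traces, ∀ i, A.run q γ i ∈ A.F

/-- `M_c ⊨ (A(q), κ) ∥ M_p`: the controller `M_c` is consistent with the
prophecy-annotated controller `(A(q), κ)` w.r.t. the plant `M_p`: at every
reachable triple of the product of `A` (started at `q`) with `M_c ∥ M_p`,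
the residual plant satisfies the prophecy for the current controller output. -/
def Consistent {AP : Type} (Oe Oc Op : Set AP) (A : DSA AP) (q : A.Q)
    (κ : A.Q → Set AP → Set (Moore AP (Oe ∪ Oc) Op))
    (Mc : Moore AP (Oe ∪ Op) Oc) (Mp : Moore AP (Oe ∪ Oc) Op) : Prop :=
  ∀ γ ∈ (par Mc Mp).Traces, ∀ i,
    Mp.at' ((par Mc Mp).run γ i).2 ∈
      κ (A.run q γ i) (Mc.out ((par Mc Mp).run γ i).1)

/-- `(A, κ)` is correct for the plant `M_p` w.r.t. the specification `φ`. -/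
def CorrectFor {AP : Type} (Oe Oc Op : Set AP) (A : DSA AP)
    (κ : A.Q → Set AP → Set (Moore AP (Oe ∪ Oc) Op))
    (φ : Set (ℕ → Set AP)) (Mp : Moore AP (Oe ∪ Oc) Op) : Prop :=
  ∀ Mc : Moore AP (Oe ∪ Op) Oc,
    Consistent Oe Oc Op A A.q0 κ Mc Mp → (par Mp Mc).Traces ⊆ φ

/-- `(A, κ)` is most permissive for the plant `M_p` w.r.t. the specification `φ`. -/
def MostPermissiveFor {AP : Type} (Oe Oc Op : Set AP) (A : DSA AP)
    (κ : A.Q → Set AP → Set (Moore AP (Oe ∪ Oc) Op))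
    (φ : Set (ℕ → Set AP)) (Mp : Moore AP (Oe ∪ Oc) Op) : Prop :=
  ∀ Mc : Moore AP (Oe ∪ Op) Oc,
    (par Mp Mc).Traces ⊆ φ → Consistent Oe Oc Op A A.q0 κ Mc Mp

/-- `X` is a safe controllable region of the safety game of `A` and `M_p`:
`X ⊆ F × S^p`, and from every `(q,s) ∈ X` some controller output `α ⊆ O_c`
keeps the game in `X` for every environment output `β ⊆ O_e`. -/
def WinStep {AP : Type} (Oe Oc Op : Set AP) (A : DSA AP)
    (Mp : Moore AP (Oe ∪ Oc) Op) (X : Set (A.Q × Mp.S)) : Prop :=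
  (∀ p ∈ X, p.1 ∈ A.F) ∧
    ∀ p ∈ X, ∃ α ⊆ Oc, ∀ β ⊆ Oe,
      (A.δ p.1 (α ∪ β ∪ Mp.out p.2), Mp.tr p.2 (α ∪ β)) ∈ X

/-- The winning region of the safety game of `A` and `M_p`: the largest
(safe controllable) set `X` with `WinStep`, i.e. the union of all of them. -/
def Win {AP : Type} (Oe Oc Op : Set AP) (A : DSA AP)
    (Mp : Moore AP (Oe ∪ Oc) Op) : Set (A.Q × Mp.S) :=
  ⋃₀ { X | WinStep Oe Oc Op A Mp X }

/-- The exact prophecy annotation `κ*` of `A`: all plants for which some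
controller with initial output `α` keeps every run of `A` from `q` inside `F`. -/
def κStar {AP : Type} (Oe Oc Op : Set AP) (A : DSA AP) (q : A.Q) (α : Set AP) :
    Set (Moore AP (Oe ∪ Oc) Op) :=
  { Mp | ∃ Mc : Moore AP (Oe ∪ Op) Oc, Mc.out Mc.s0 = α ∧ SafeRuns A q (par Mp Mc) }

/-- `Add_{M_p}(q, α)`: the residual plants `M_p(s)` such that `q ∈ F` and output `α`
leads into the winning region for every environment output `β ⊆ O_e`. -/
def AddSet {AP : Type} (Oe Oc Op : Set AP) (A : DSA AP)
    (Mp : Moore AP (Oe ∪ Oc) Op) (q : A.Q) (α : Set AP) :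
    Set (Moore AP (Oe ∪ Oc) Op) :=
  { M | ∃ s : Mp.S, M = Mp.at' s ∧ q ∈ A.F ∧
      ∀ β ⊆ Oe, (A.δ q (α ∪ β ∪ Mp.out s), Mp.tr s (α ∪ β)) ∈ Win Oe Oc Op A Mp }

/-- `Rem_{M_p}(q, α)`: the residual plants `M_p(s)` such that output `α` leaves the
winning region for some environment output `β ⊆ O_e`. -/
def RemSet {AP : Type} (Oe Oc Op : Set AP) (A : DSA AP)
    (Mp : Moore AP (Oe ∪ Oc) Op) (q : A.Q) (α : Set AP) :
    Set (Moore AP (Oe ∪ Oc) Op) :=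
  { M | ∃ s : Mp.S, M = Mp.at' s ∧
      ∃ β ⊆ Oe, (A.δ q (α ∪ β ∪ Mp.out s), Mp.tr s (α ∪ β)) ∉ Win Oe Oc Op A Mp }

/-- One-step consequence of safety for a Moore machine. -/
theorem safeRuns_step {AP : Type} {I O : Set AP} (A : DSA AP) (M : Moore AP I O) (q : A.Q)
    (s : M.S) (h : SafeRuns A q (M.at' s)) (σ : Set AP) (hσ : σ ∩ O = M.out s) :
    SafeRuns A (A.δ q σ) (M.at' (M.tr s (σ ∩ I))) := by
  intro γ hγ i
  let γ' : ℕ → Set AP := fun n => Nat.casesOn n σ γ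
  have hrun : ∀ j, (M.at' s).run γ' (j+1) = (M.at' (M.tr s (σ ∩ I))).run γ j := by
    intro j
    induction j with
    | zero => rfl
    | succ j ih =>
      show M.tr ((M.at' s).run γ' (j+1)) (γ j ∩ I) = M.tr _ (γ j ∩ I)
      rw [ih]
  have hA : ∀ j, A.run q γ' (j+1) = A.run (A.δ q σ) γ j := by
    intro j
    induction j with
    | zero => rfl
    | succ j ih =>
      show A.δ (A.run q γ' (j+1)) (γ j) = A.δ _ (γ j)
      rw [ih]
  have ht : γ' ∈ (M.at' s).Traces := by
    intro j
    cases j with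
    | zero => exact hσ
    | succ j =>
      have := hγ j
      show γ j ∩ O = M.out ((M.at' s).run γ' (j+1))
      rw [hrun]
      exact this
  have := h γ' ht (i+1)
  rwa [hA] at this

/-- A Moore machine has a trace. -/
theorem traces_nonempty {AP : Type} {I O : Set AP} (M : Moore AP I O) :
    ∃ γ, γ ∈ M.Traces := by
  let r : ℕ → M.S := fun n => Nat.rec M.s0 (fun _ s => M.tr s (M.out s ∩ I)) n
  refine ⟨fun n => M.out (r n), ?_⟩
  have hr : ∀ n, M.run (fun n => M.out (r n)) n = r n := by
    intro n
    induction n with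
    | zero => rfl
    | succ n ih =>
      show M.tr (M.run _ n) (M.out (r n) ∩ I) = M.tr (r n) (M.out (r n) ∩ I)
      rw [ih]
  intro j
  rw [hr]
  exact Set.inter_eq_left.2 (M.out_sub _)

/-- The one-step unfolding for the composition of plant and controller. -/
theorem safeRuns_par_step {AP : Type} (Oe Oc Op : Set AP)
    (hec : Disjoint Oe Oc) (hep : Disjoint Oe Op) (hcp : Disjoint Oc Op)
    (A : DSA AP) (Mp : Moore AP (Oe ∪ Oc) Op) (Mc : Moore AP (Oe ∪ Op) Oc)
    (q : A.Q) (s : Mp.S) (c : Mc.S) (h : SafeRuns A q ((par Mp Mc).at' (s, c))) :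
    q ∈ A.F ∧ ∀ β ⊆ Oe, ∃ c', SafeRuns A (A.δ q (Mc.out c ∪ β ∪ Mp.out s))
      ((par Mp Mc).at' (Mp.tr s (Mc.out c ∪ β), c')) := by
  constructor
  · obtain ⟨γ, hγ⟩ := traces_nonempty ((par Mp Mc).at' (s, c))
    exact h γ hγ 0
  · intro β hβ
    have hc := Mc.out_sub c
    have hp := Mp.out_sub s
    rw [Set.disjoint_left] at hec hep hcp
    have := safeRuns_step A (par Mp Mc) q (s, c) h (Mc.out c ∪ β ∪ Mp.out s) (by
      show _ = Mp.out s ∪ Mc.out c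
      ext x
      have h1 := @hc x
      have h2 := @hp x
      have h3 := @hβ x
      have h4 := @hec x
      have h5 := @hep x
      have h6 := @hcp x
      simp only [Set.mem_inter_iff, Set.mem_union]
      tauto)
    refine ⟨((par Mp Mc).tr (s, c) ((Mc.out c ∪ β ∪ Mp.out s) ∩
      ((Oe ∪ Oc ∪ (Oe ∪ Op)) \ (Op ∪ Oc)))).2, ?_⟩
    · convert this using 2
      refine congrArg (par Mp Mc).at' (Prod.ext ?_ rfl)
      show Mp.tr s _ = Mp.tr s _
      rw [Mp.tr_inv]
      congr 1
      ext x
      have h1 := @hc x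
      have h2 := @hp x
      have h3 := @hβ x
      have h4 := @hec x
      have h5 := @hep x
      have h6 := @hcp x
      simp only [Set.mem_inter_iff, Set.mem_union, Set.mem_sdiff]
      grind

theorem win_winStep {AP : Type} (Oe Oc Op : Set AP) (A : DSA AP)
    (Mp : Moore AP (Oe ∪ Oc) Op) : WinStep Oe Oc Op A Mp (Win Oe Oc Op A Mp) := by
  constructor
  · rintro p ⟨X, hX, hp⟩
    exact hX.1 p hp
  · rintro p ⟨X, hX, hp⟩
    obtain ⟨α, hα, h⟩ := hX.2 p hp
    exact ⟨α, hα, fun β hβ => ⟨X, hX, h β hβ⟩⟩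

/-- The controller that first outputs `α` and then follows the strategy `f`. -/
def stratCtrl {AP : Type} (Oe Oc Op : Set AP) (A : DSA AP) (Mp : Moore AP (Oe ∪ Oc) Op)
    (q : A.Q) (s : Mp.S) (α : Set AP) (hα : α ⊆ Oc) (f : A.Q × Mp.S → Set AP)
    (hf : ∀ p, f p ⊆ Oc) : Moore AP (Oe ∪ Op) Oc where
  S := Option (A.Q × Mp.S)
  fin := by haveI := A.fin; haveI := Mp.fin; exact inferInstance
  s0 := none
  tr o σ := some (A.δ (o.getD (q, s)).1 (o.elim α f ∪ (σ ∩ Oe) ∪ Mp.out (o.getD (q, s)).2),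
    Mp.tr (o.getD (q, s)).2 (o.elim α f ∪ (σ ∩ Oe)))
  out o := o.elim α f
  tr_inv := by
    intro o σ
    have : σ ∩ (Oe ∪ Op) ∩ Oe = σ ∩ Oe := by
      ext x
      simp only [Set.mem_inter_iff, Set.mem_union]
      tauto
    rw [this]
  out_sub := by
    intro o
    cases o with
    | none => exact hα
    | some p => exact hf p

theorem set_aux1 {AP : Type} {Oe Oc Op g c : Set AP}
    (hec : Disjoint Oe Oc) (hep : Disjoint Oe Op) :
    ((g ∩ (((Oe ∪ Oc) ∪ (Oe ∪ Op)) \ (Op ∪ Oc))) ∩ (((Oe ∪ Oc) ∪ (Oe ∪ Op)) \ (Op ∪ Oc)) ∪ c) ∩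
      (Oe ∪ Oc) = (c ∪ (g ∩ Oe)) ∩ (Oe ∪ Oc) := by
  rw [Set.disjoint_left] at hec hep
  ext x
  have h4 := @hec x
  have h5 := @hep x
  simp only [Set.mem_inter_iff, Set.mem_union, Set.mem_sdiff]
  grind

theorem set_aux2 {AP : Type} {Oe Oc Op g c p : Set AP}
    (hec : Disjoint Oe Oc) (hep : Disjoint Oe Op) (hcp : Disjoint Oc Op)
    (hc : c ⊆ Oc) (hp : p ⊆ Op) (hout : g ∩ (Op ∪ Oc) = p ∪ c) :
    ((g ∩ (((Oe ∪ Oc) ∪ (Oe ∪ Op)) \ (Op ∪ Oc))) ∩ (((Oe ∪ Oc) ∪ (Oe ∪ Op)) \ (Op ∪ Oc)) ∪ p) ∩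
      (Oe ∪ Op) = g ∩ (Oe ∪ Op) := by
  rw [Set.disjoint_left] at hec hep hcp
  ext x
  have h0 := Set.ext_iff.1 hout x
  have h1 := @hc x
  have h2 := @hp x
  have h4 := @hec x
  have h5 := @hep x
  have h6 := @hcp x
  simp only [Set.mem_inter_iff, Set.mem_union, Set.mem_sdiff] at h0 ⊢
  clear hec hep hcp hc hp hout
  grind

/-- Characterization of the exact prophecy annotation via the
winning region. -/
theorem κStar_characterization
    {AP : Type} [Finite AP] (Oe Oc Op : Set AP)
    (hec : Disjoint Oe Oc) (hep : Disjoint Oe Op) (hcp : Disjoint Oc Op)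
    (hcov : Oe ∪ Oc ∪ Op = Set.univ)
    (A : DSA AP) (Mp : Moore AP (Oe ∪ Oc) Op) :
    ∀ (q : A.Q) (s : Mp.S), ∀ α ⊆ Oc,
      (Mp.at' s ∈ κStar Oe Oc Op A q α ↔
        q ∈ A.F ∧
          ∀ β ⊆ Oe, (A.δ q (α ∪ β ∪ Mp.out s), Mp.tr s (α ∪ β)) ∈ Win Oe Oc Op A Mp) := by
  intro q s α hα
  constructor
  · rintro ⟨Mc, rfl, hsafe⟩
    have hsafe : SafeRuns A q ((par Mp Mc).at' (s, Mc.s0)) := hsafe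
    obtain ⟨hq, hst⟩ := safeRuns_par_step Oe Oc Op hec hep hcp A Mp Mc q s Mc.s0 hsafe
    refine ⟨hq, fun β hβ => ⟨{p | ∃ c, SafeRuns A p.1 ((par Mp Mc).at' (p.2, c))}, ?_, hst β hβ⟩⟩
    constructor
    · rintro p ⟨c, hc⟩
      exact (safeRuns_par_step Oe Oc Op hec hep hcp A Mp Mc _ _ c hc).1
    · rintro p ⟨c, hc⟩
      exact ⟨Mc.out c, Mc.out_sub c,
        (safeRuns_par_step Oe Oc Op hec hep hcp A Mp Mc _ _ c hc).2⟩
  · rintro ⟨hq, hwin⟩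
    have hW := win_winStep Oe Oc Op A Mp
    have hex : ∀ p : A.Q × Mp.S, ∃ a ⊆ Oc, p ∈ Win Oe Oc Op A Mp → ∀ β ⊆ Oe,
        (A.δ p.1 (a ∪ β ∪ Mp.out p.2), Mp.tr p.2 (a ∪ β)) ∈ Win Oe Oc Op A Mp := by
      intro p
      by_cases hp : p ∈ Win Oe Oc Op A Mp
      · obtain ⟨a, ha, h⟩ := hW.2 p hp
        exact ⟨a, ha, fun _ => h⟩
      · exact ⟨∅, Set.empty_subset _, fun h => absurd h hp⟩
    choose f hf hfW using hex
    let Mc := stratCtrl Oe Oc Op A Mp q s α hα f hf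
    refine ⟨Mc, rfl, ?_⟩
    intro γ hγ
    let r : ℕ → Mp.S × Option (A.Q × Mp.S) := (par (Mp.at' s) Mc).run γ
    have key : ∀ i, (A.run q γ i, (r i).1) = (r i).2.getD (q, s) ∧
        ∀ p, (r i).2 = some p → p ∈ Win Oe Oc Op A Mp := by
      intro i
      induction i with
      | zero =>
        refine ⟨rfl, ?_⟩
        intro p hp
        cases hp
      | succ i ih =>
        obtain ⟨ih1, ih2⟩ := ih
        have hout : γ i ∩ (Op ∪ Oc) = Mp.out (r i).1 ∪ Mc.out (r i).2 := hγ i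
        have hr : r (i+1) = (par Mp Mc).tr (r i) (γ i ∩ (((Oe ∪ Oc) ∪ (Oe ∪ Op)) \ (Op ∪ Oc))) := rfl
        have hγi : γ i = Mc.out (r i).2 ∪ (γ i ∩ Oe) ∪ Mp.out (r i).1 := by
          ext x
          have h1 := Set.ext_iff.1 hout x
          have h2 := Set.ext_iff.1 hcov x
          simp only [Set.mem_inter_iff, Set.mem_union, Set.mem_univ, iff_true] at h1 h2 ⊢
          tauto
        have hc := Mc.out_sub (r i).2
        have hp := Mp.out_sub (r i).1
        have e1 : (r (i+1)).1 = Mp.tr (r i).1 (Mc.out (r i).2 ∪ (γ i ∩ Oe)) := by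
          rw [hr, Mp.tr_inv _ (Mc.out (r i).2 ∪ (γ i ∩ Oe))]
          show Mp.tr _ _ = _
          exact congrArg _ (set_aux1 hec hep)
        have e2 : (r (i+1)).2 = Mc.tr (r i).2 (γ i) := by
          rw [hr]
          refine Eq.trans ?_ (Mc.tr_inv (r i).2 (γ i)).symm
          show Mc.tr (r i).2 (((γ i ∩ (((Oe ∪ Oc) ∪ (Oe ∪ Op)) \ (Op ∪ Oc))) ∩
            (((Oe ∪ Oc) ∪ (Oe ∪ Op)) \ (Op ∪ Oc)) ∪ Mp.out (r i).1) ∩ (Oe ∪ Op)) = _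
          exact congrArg _ (set_aux2 hec hep hcp hc hp hout)
        have e3 : Mc.tr (r i).2 (γ i) = some (A.run q γ (i+1), (r (i+1)).1) := by
          show some (A.δ ((r i).2.getD (q, s)).1 (Mc.out (r i).2 ∪ (γ i ∩ Oe) ∪
            Mp.out ((r i).2.getD (q, s)).2),
            Mp.tr ((r i).2.getD (q, s)).2 (Mc.out (r i).2 ∪ (γ i ∩ Oe))) = _
          rw [← ih1, e1]
          show some (A.δ (A.run q γ i) (Mc.out (r i).2 ∪ (γ i ∩ Oe) ∪ Mp.out (r i).1), _) =
            some (A.δ (A.run q γ i) (γ i), _)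
          rw [← hγi]
        rw [e2, e3]
        refine ⟨rfl, ?_⟩
        rintro p hp'
        rw [← e3] at hp'
        cases ho : (r i).2 with
        | none =>
          rw [ho] at hp'
          cases hp'
          exact hwin _ Set.inter_subset_right
        | some p0 =>
          rw [ho] at hp'
          cases hp'
          exact hfW p0 (ih2 p0 ho) _ Set.inter_subset_right
    intro i
    obtain ⟨k1, k2⟩ := key i
    have k3 : A.run q γ i = ((r i).2.getD (q, s)).1 := by rw [← k1]
    rw [k3]
    cases ho : (r i).2 with
    | none => exact hq
    | some p => exact hW.1 p (k2 p ho)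
end

section
/- Correctness of the exact prophecy annotation: Let φ be a specification and A = (Q, q0, δ, safe(F)) a deterministic safety automaton over Σ with L(A) = L(φ), and let κ* be the exact prophecy annotation of A. Then the prophecy-annotated controller (A, κ*) is correct for every plant M_p ∈ ℙ: every controller M_c ∈ ℂ with M_c ⊨ (A, κ*) ∥ M_p satisfies M_p ∥ M_c ⊨ φ. -/
theorem par_run_swap {AP : Type} {I1 O1 I2 O2 : Set AP} (M1 : Moore AP I1 O1)
    (M2 : Moore AP I2 O2) (γ : ℕ → Set AP) (i : ℕ) :
    (par M2 M1).run γ i = (((par M1 M2).run γ i).2, ((par M1 M2).run γ i).1) := by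
  induction i with
  | zero => rfl
  | succ n ih =>
    simp only [Moore.run]
    rw [ih]
    simp only [par, Set.union_comm I2 I1, Set.union_comm O2 O1]

theorem par_traces_swap {AP : Type} {I1 O1 I2 O2 : Set AP} (M1 : Moore AP I1 O1)
    (M2 : Moore AP I2 O2) (γ : ℕ → Set AP) (h : γ ∈ (par M1 M2).Traces) :
    γ ∈ (par M2 M1).Traces := by
  intro j
  have hj := h j
  rw [par_run_swap M1 M2]
  have hc : γ j ∩ (O2 ∪ O1) = γ j ∩ (O1 ∪ O2) := by rw [Set.union_comm O2 O1]
  exact (hc.trans hj).trans (Set.union_comm _ _)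

/-- The state sequence of a machine reading only empty inputs. -/
def emptyRun {AP : Type} {I O : Set AP} (M : Moore AP I O) : ℕ → M.S
  | 0 => M.s0
  | j + 1 => M.tr (emptyRun M j) ∅

theorem exists_trace {AP : Type} {I O : Set AP} (M : Moore AP I O) (h : Disjoint O I) :
    ∃ γ, γ ∈ M.Traces := by
  have hr : ∀ j, M.run (fun j => M.out (emptyRun M j)) j = emptyRun M j := by
    intro j
    induction j with
    | zero => rfl
    | succ n ih =>
      simp only [Moore.run, emptyRun]
      rw [ih, (h.mono_left (M.out_sub _)).inter_eq]
  refine ⟨fun j => M.out (emptyRun M j), fun j => ?_⟩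
  rw [hr]
  exact Set.inter_eq_left.2 (M.out_sub _)

/-- Correctness of the exact prophecy annotation. -/
theorem κStar_correct
    {AP : Type} [Finite AP] (Oe Oc Op : Set AP)
    (hec : Disjoint Oe Oc) (hep : Disjoint Oe Op) (hcp : Disjoint Oc Op)
    (hcov : Oe ∪ Oc ∪ Op = Set.univ)
    (φ : Set (ℕ → Set AP)) (A : DSA AP) (hL : A.Lang = φ) :
    ∀ Mp : Moore AP (Oe ∪ Oc) Op,
      CorrectFor Oe Oc Op A (κStar Oe Oc Op A) φ Mp := by
  intro Mp Mc hcons γ hγ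
  rw [← hL]
  intro i
  obtain ⟨Mc', -, hsafe⟩ := hcons γ (par_traces_swap _ _ γ hγ) i
  obtain ⟨γ', hγ'⟩ := exists_trace (par (Mp.at' ((par Mc Mp).run γ i).2) Mc')
    Set.disjoint_sdiff_right
  exact hsafe γ' hγ' 0
end
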